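/- Let x, y ∈ Ω with x₁ = y₁ and with distinct first E-segments X₁ ≠ Y₁. Then π_E(x) ≠ π_E(y), π_F(g(x)) ≠ π_F(g(y)), and |Λ_E(x,y) − Λ_F(g(x),g(y))| ≤ 3. -/

import Mathlib

/-!
Both attractors lie in the unit square and miss its two upper corners, so it is easy to decide
which small cylinders meet. In `E` the piece `5` is disjoint from all other first-level pieces,
`2` is disjoint from `4`, and `2` meets `1` and `3` only on its left and right sides, which the
subpieces `22` and `25` avoid. In `F` the same list of cylinders is disjoint (`2` now meets `1` and
`3` on its top and bottom sides), and moreover `3` is disjoint from `4`, because `F` does not meet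
`F + 1`. These facts are `sepE` and `sepF`.

If `x` and `y` agree on their first `c` letters and then separate in this way (`NearSep`), their cylinders of
level `c + 2` are disjoint, so the coded points differ and the separation number is `c` or `c + 1`.

Distinct first segments with a common first letter start with `3` or `4`, and `shape` lists the
possibilities: `x = 35^k a⋯` with `a ≠ 5`, or `x = 42^k5⋯`, or `x = 42^k a⋯` with `a ∉ {2,5}`,
together with the beginning of `g(x)`. Here membership in `Ω` ensures that the runs of `5` and of
`2` end. Comparing two such forms (`comparable_AA`, `comparable_BB`, `comparable_BC`), the common
prefixes of `x, y` and of `g(x), g(y)` differ in length by at most one, so the separation numbers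
differ by at most two.
-/


open MeasureTheory

noncomputable section

/-- The alphabet `{1,…,5}`, encoded as `Fin 5` (letter `k` is index `k-1`). -/
abbrev Letter := Fin 5

/-- The letter `1`. -/
def l1 : Letter := 0
/-- The letter `2`. -/
def l2 : Letter := 1
/-- The letter `3`. -/
def l3 : Letter := 2
/-- The letter `4`. -/
def l4 : Letter := 3
/-- The letter `5`. -/
def l5 : Letter := 4

/-- The digit set of `E`: `(d_1,…,d_5) = (0, 1, 2, 2+i, 1+2i)`. -/
def dE : Letter → ℂ := ![0, 1, 2, 2 + Complex.I, 1 + 2 * Complex.I]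

/-- The digit set of `F`: `(e_1,…,e_5) = (1+2i, 1+i, 1, 0, 2+i)`. -/
def dF : Letter → ℂ := ![1 + 2 * Complex.I, 1 + Complex.I, 1, 0, 2 + Complex.I]

/-- The map `φ^E_j(z) = (z + d_j)/3`. -/
def phiE (j : Letter) (z : ℂ) : ℂ := (z + dE j) / 3

/-- The map `φ^F_j(z) = (z + e_j)/3`. -/
def phiF (j : Letter) (z : ℂ) : ℂ := (z + dF j) / 3

/-- For a finite word `w = w_1⋯w_n`, the composition `φ_{w_1} ∘ ⋯ ∘ φ_{w_n}`
(the empty word gives the identity). -/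
def iterPhi (φ : Letter → ℂ → ℂ) : List Letter → ℂ → ℂ
  | [] => id
  | j :: w => φ j ∘ iterPhi φ w

/-- `K` is the attractor of the IFS `{φ_j}`: the (unique) nonempty compact set with
`K = ⋃_j φ_j(K)`. -/
def IsAttractor (φ : Letter → ℂ → ℂ) (K : Set ℂ) : Prop :=
  K.Nonempty ∧ IsCompact K ∧ K = ⋃ j, φ j '' K

/-- The prefix `x_1⋯x_n` of the sequence `x`. -/
def preWord (x : ℕ → Letter) (n : ℕ) : List Letter := List.ofFn fun i : Fin n => x i

/-- The factor `x_{j+1}⋯x_{j+L}` of `x` (`j` entries skipped, length `L`). -/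
def fword (x : ℕ → Letter) (j L : ℕ) : List Letter := List.ofFn fun i : Fin L => x (j + i)

/-- `p = π_K(x)`, i.e. `p` is the point of `⋂_{n≥1} φ_{x_1⋯x_n}(K)`. -/
def codes (φ : Letter → ℂ → ℂ) (K : Set ℂ) (x : ℕ → Letter) (p : ℂ) : Prop :=
  ∀ n, p ∈ iterPhi φ (preWord x n) '' K

/-- `Ω`: the sequences that are eventually constant equal to the letter `4`. -/
def OmegaSeq : Set (ℕ → Letter) := {x | ∃ N, ∀ n, N ≤ n → x n = l4}

/-- `Λ(x,y) = n`: the separation number of `(x,y)` for the IFS `φ` with attractor `K`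
is `n`, i.e. `n` is the largest integer with `φ_{x_1⋯x_n}(K) ∩ φ_{y_1⋯y_n}(K) ≠ ∅`. -/
def SepNum (φ : Letter → ℂ → ℂ) (K : Set ℂ) (x y : ℕ → Letter) (n : ℕ) : Prop :=
  (iterPhi φ (preWord x n) '' K ∩ iterPhi φ (preWord y n) '' K).Nonempty ∧
    ∀ m, n < m → iterPhi φ (preWord x m) '' K ∩ iterPhi φ (preWord y m) '' K = ∅

/-- The factor of `x` starting at position `j` (0-indexed) of length `L` is an
`E`-special segment: either `35^k` followed by a letter `≠ 5` (so `L = k+1`, `k ≥ 1`),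
or `42^{k-1}5` (so `L = k+1`, `k ≥ 1`). -/
def ESpecial (x : ℕ → Letter) (j L : ℕ) : Prop :=
  (2 ≤ L ∧ x j = l3 ∧ (∀ i, 1 ≤ i → i < L → x (j + i) = l5) ∧ x (j + L) ≠ l5) ∨
  (2 ≤ L ∧ x j = l4 ∧ (∀ i, 1 ≤ i → i < L - 1 → x (j + i) = l2) ∧ x (j + L - 1) = l5)

/-- The entry of `x` at position `j` is an `E`-plain segment: it belongs to no
`E`-special segment of `x`. -/
def EPlain (x : ℕ → Letter) (j : ℕ) : Prop :=
  ∀ p L, ESpecial x p L → ¬(p ≤ j ∧ j < p + L)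

/-- An `E`-segment: an `E`-special segment, or a single `E`-plain entry. -/
def ESegment (x : ℕ → Letter) (j L : ℕ) : Prop :=
  ESpecial x j L ∨ (L = 1 ∧ EPlain x j)

/-- The factor of `u` starting at position `j` of length `L` is an `F`-special segment:
`42^m5` followed by a letter `≠ 5` (`L = m+2`, `m ≥ 0`), or `42^m55` (`L = m+3`, `m ≥ 0`),
or `35` (`L = 2`). -/
def FSpecial (u : ℕ → Letter) (j L : ℕ) : Prop :=
  (2 ≤ L ∧ u j = l4 ∧ (∀ i, 1 ≤ i → i < L - 1 → u (j + i) = l2) ∧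
    u (j + L - 1) = l5 ∧ u (j + L) ≠ l5) ∨
  (3 ≤ L ∧ u j = l4 ∧ (∀ i, 1 ≤ i → i < L - 2 → u (j + i) = l2) ∧
    u (j + L - 2) = l5 ∧ u (j + L - 1) = l5) ∨
  (L = 2 ∧ u j = l3 ∧ u (j + 1) = l5)

/-- The entry of `u` at position `j` is an `F`-plain segment. -/
def FPlain (u : ℕ → Letter) (j : ℕ) : Prop :=
  ∀ p L, FSpecial u p L → ¬(p ≤ j ∧ j < p + L)

/-- An `F`-segment: an `F`-special segment, or a single `F`-plain entry. -/
def FSegment (u : ℕ → Letter) (j L : ℕ) : Prop :=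
  FSpecial u j L ∨ (L = 1 ∧ FPlain u j)

/-- `b` enumerates the starting positions of a factorization of `x` into consecutive
segments: `b 0 = 0` and for each `j`, the factor occupying positions `[b j, b (j+1))`
is a segment (in the sense of `Seg`). -/
def SegDecomp (Seg : (ℕ → Letter) → ℕ → ℕ → Prop) (x : ℕ → Letter) (b : ℕ → ℕ) : Prop :=
  b 0 = 0 ∧ ∀ j, Seg x (b j) (b (j + 1) - b j)

/-- The word map `g₀`: `35^k ↦ 42^{k-1}5`, `42^k5 ↦ 42^{k-1}55` (`k ≥ 1`), `45 ↦ 35`,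
and `a ↦ a` for single letters.  (All these maps preserve length.) -/
def g0 (w : List Letter) : List Letter :=
  if w.length ≤ 1 then w
  else if w = [l4, l5] then [l3, l5]
  else if w.headI = l3 then l4 :: (List.replicate (w.length - 2) l2 ++ [l5])
  else l4 :: (List.replicate (w.length - 3) l2 ++ [l5, l5])

/-- `u = g(x)`: for some `E`-segment decomposition `x = X₁X₂⋯` (with starting positions
`b`), the sequence `u` is `g₀(X₁)g₀(X₂)⋯`, each `g₀(X_j)` occupying the positions
of `X_j` (note that `g₀` preserves lengths). -/
def gRel (x u : ℕ → Letter) : Prop :=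
  ∃ b : ℕ → ℕ, SegDecomp ESegment x b ∧
    ∀ j, fword u (b j) (b (j + 1) - b j) = g0 (fword x (b j) (b (j + 1) - b j))

/-- `E' = π_E(Ω)`. -/
def Eset' (E : Set ℂ) : Set ℂ := {p | ∃ x ∈ OmegaSeq, codes phiE E x p}

/-- `F' = π_F(Ω)`. -/
def Fset' (F : Set ℂ) : Set ℂ := {q | ∃ u ∈ OmegaSeq, codes phiF F u q}

/-- The dimension `s = log 5 / log 3`. -/
def sDim : ℝ := Real.log 5 / Real.log 3

end

/-! ### Separation of cylinders -/

/-- The IFS `z ↦ (z + d j) / 3` with digit map `d`; both `phiE` and `phiF` have this form. -/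
noncomputable def phiD (d : Letter → ℂ) (j : Letter) (z : ℂ) : ℂ := (z + d j) / 3

/-- All digits lie in the square `[0,2]²`. -/
def DigitBox (d : Letter → ℂ) : Prop :=
  ∀ j, 0 ≤ (d j).re ∧ (d j).re ≤ 2 ∧ 0 ≤ (d j).im ∧ (d j).im ≤ 2

/-- Neither `2i` nor `2 + 2i` is a digit, so both upper corners of the unit square are
missing from the attractor. -/
def NoTopCorner (d : Letter → ℂ) : Prop :=
  ∀ j, (d j).im = 2 → (d j).re ≠ 0 ∧ (d j).re ≠ 2

theorem phiD_eq {d : Letter → ℂ} {j : Letter} {z p : ℂ} (h : phiD d j z = p) :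
    3 * p.re = z.re + (d j).re ∧ 3 * p.im = z.im + (d j).im := by
  have h3 : z + d j = 3 * p := by rw [← h, phiD]; ring
  have h1 := congrArg Complex.re h3
  have h2 := congrArg Complex.im h3
  simp at h1 h2
  exact ⟨h1.symm, h2.symm⟩

theorem phiD_inj (d : Letter → ℂ) (j : Letter) : Function.Injective (phiD d j) := by
  intro z w h
  simpa [phiD] using h

theorem attractor_step {φ : Letter → ℂ → ℂ} {K : Set ℂ} (hK : IsAttractor φ K) {z : ℂ}
    (hz : z ∈ K) : ∃ j, ∃ w ∈ K, φ j w = z := by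
  have h := hK.2.2
  rw [h] at hz
  simpa using hz

theorem attractor_map {φ : Letter → ℂ → ℂ} {K : Set ℂ} (hK : IsAttractor φ K) (j : Letter)
    {z : ℂ} (hz : z ∈ K) : φ j z ∈ K := by
  have h := hK.2.2
  rw [h]
  exact Set.mem_iUnion.2 ⟨j, z, hz, rfl⟩

/-- An attractor with digits in `[0,2]²` lies in the unit square: at a point where a coordinate
is extremal, one step of the IFS gives the bound. -/
theorem attractor_box {d : Letter → ℂ} {K : Set ℂ} (hd : DigitBox d)
    (hK : IsAttractor (phiD d) K) {z : ℂ} (hz : z ∈ K) :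
    0 ≤ z.re ∧ z.re ≤ 1 ∧ 0 ≤ z.im ∧ z.im ≤ 1 := by
  have hc := hK.2.1
  have hn := hK.1
  obtain ⟨a, ha, ha'⟩ := hc.exists_isMinOn hn Complex.continuous_re.continuousOn
  obtain ⟨b, hb, hb'⟩ := hc.exists_isMaxOn hn Complex.continuous_re.continuousOn
  obtain ⟨e, he, he'⟩ := hc.exists_isMinOn hn Complex.continuous_im.continuousOn
  obtain ⟨f, hf, hf'⟩ := hc.exists_isMaxOn hn Complex.continuous_im.continuousOn
  obtain ⟨ja, wa, hwa, qa⟩ := attractor_step hK ha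
  obtain ⟨jb, wb, hwb, qb⟩ := attractor_step hK hb
  obtain ⟨je, we, hwe, qe⟩ := attractor_step hK he
  obtain ⟨jf, wf, hwf, qf⟩ := attractor_step hK hf
  have a1 := isMinOn_iff.1 ha' _ hwa
  have a2 := isMinOn_iff.1 ha' _ hz
  have b1 := isMaxOn_iff.1 hb' _ hwb
  have b2 := isMaxOn_iff.1 hb' _ hz
  have e1 := isMinOn_iff.1 he' _ hwe
  have e2 := isMinOn_iff.1 he' _ hz
  have f1 := isMaxOn_iff.1 hf' _ hwf
  have f2 := isMaxOn_iff.1 hf' _ hz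
  have := phiD_eq qa
  have := phiD_eq qb
  have := phiD_eq qe
  have := phiD_eq qf
  have := hd ja
  have := hd jb
  have := hd je
  have := hd jf
  refine ⟨?_, ?_, ?_, ?_⟩ <;> linarith

theorem no_top_corner {d : Letter → ℂ} {K : Set ℂ} (hd : DigitBox d) (hc : NoTopCorner d)
    (hK : IsAttractor (phiD d) K) {z : ℂ} (hz : z ∈ K) (him : z.im = 1) :
    z.re ≠ 0 ∧ z.re ≠ 1 := by
  obtain ⟨j, w, hw, q⟩ := attractor_step hK hz
  obtain ⟨q1, q2⟩ := phiD_eq q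
  obtain ⟨b1, b2, b3, b4⟩ := attractor_box hd hK hw
  obtain ⟨d1, d2, d3, d4⟩ := hd j
  obtain ⟨c1, c2⟩ := hc j (by linarith)
  exact ⟨fun h => c1 (by linarith), fun h => c2 (by linarith)⟩

theorem iterPhi_append (φ : Letter → ℂ → ℂ) (w w' : List Letter) (z : ℂ) :
    iterPhi φ (w ++ w') z = iterPhi φ w (iterPhi φ w' z) := by
  induction w with
  | nil => rfl
  | cons a w ih => simp [iterPhi, ih]

theorem iterPhi_inj {φ : Letter → ℂ → ℂ} (h : ∀ j, Function.Injective (φ j))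
    (w : List Letter) : Function.Injective (iterPhi φ w) := by
  induction w with
  | nil => exact Function.injective_id
  | cons a w ih => exact (h a).comp ih

theorem preWord_succ (x : ℕ → Letter) (n : ℕ) : preWord x (n + 1) = preWord x n ++ [x n] := by
  rw [preWord, List.ofFn_succ', List.concat_eq_append]
  rfl

theorem preWord_congr {x y : ℕ → Letter} {n : ℕ} (h : ∀ i, i < n → x i = y i) :
    preWord x n = preWord y n := by
  unfold preWord
  congr 1
  funext i
  exact h i i.2

/-- The level-`n` cylinders of `x` and `y` are disjoint. -/
def DisjCyl (φ : Letter → ℂ → ℂ) (K : Set ℂ) (x y : ℕ → Letter) (n : ℕ) : Prop :=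
  iterPhi φ (preWord x n) '' K ∩ iterPhi φ (preWord y n) '' K = ∅

theorem DisjCyl.symm {φ : Letter → ℂ → ℂ} {K : Set ℂ} {x y : ℕ → Letter} {n : ℕ}
    (h : DisjCyl φ K x y n) : DisjCyl φ K y x n := by
  unfold DisjCyl at *
  rwa [Set.inter_comm]

theorem cyl_antitone {φ : Letter → ℂ → ℂ} {K : Set ℂ} (hK : IsAttractor φ K) (x : ℕ → Letter) :
    Antitone fun n => iterPhi φ (preWord x n) '' K := by
  refine antitone_nat_of_succ_le fun n => ?_
  rintro _ ⟨z, hz, rfl⟩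
  rw [preWord_succ, iterPhi_append]
  exact ⟨_, attractor_map hK _ hz, rfl⟩

/-- `Sep2 φ K a a' b`: the cylinder `aa'` is disjoint from the cylinder `b`. -/
def Sep2 (φ : Letter → ℂ → ℂ) (K : Set ℂ) (a a' b : Letter) : Prop :=
  ∀ z ∈ K, ∀ w ∈ K, φ a (φ a' z) ≠ φ b w

/-- `x` and `y` agree on their first `c` letters and their cylinders of level `c + 2` are
disjoint; hence their separation number is `c` or `c + 1`. -/
def NearSep (φ : Letter → ℂ → ℂ) (K : Set ℂ) (x y : ℕ → Letter) (c : ℕ) : Prop :=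
  (∀ i, i < c → x i = y i) ∧ DisjCyl φ K x y (c + 2)

theorem NearSep.symm {φ : Letter → ℂ → ℂ} {K : Set ℂ} {x y : ℕ → Letter} {c : ℕ}
    (h : NearSep φ K x y c) : NearSep φ K y x c :=
  ⟨fun i hi => (h.1 i hi).symm, h.2.symm⟩

theorem NearSep.of_sep2 {φ : Letter → ℂ → ℂ} {K : Set ℂ} (hφ : ∀ j, Function.Injective (φ j))
    (hK : IsAttractor φ K) {x y : ℕ → Letter} {c : ℕ} (h : ∀ i, i < c → x i = y i)
    (hs : Sep2 φ K (x c) (x (c + 1)) (y c)) : NearSep φ K x y c := by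
  refine ⟨h, ?_⟩
  rw [DisjCyl, Set.eq_empty_iff_forall_notMem]
  rintro p ⟨⟨z, hz, hp⟩, ⟨w, hw, hq⟩⟩
  rw [← hq, preWord_succ, preWord_succ, preWord_succ, preWord_succ, preWord_congr h] at hp
  simp only [iterPhi_append] at hp
  exact hs z hz _ (attractor_map hK (y (c + 1)) hw) (iterPhi_inj hφ _ hp)

theorem NearSep.codes_ne {φ : Letter → ℂ → ℂ} {K : Set ℂ} {x y : ℕ → Letter} {c : ℕ}
    (h : NearSep φ K x y c) {p q : ℂ} (hp : codes φ K x p) (hq : codes φ K y q) : p ≠ q := by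
  rintro rfl
  have h2 := h.2
  rw [DisjCyl, Set.eq_empty_iff_forall_notMem] at h2
  exact h2 p ⟨hp _, hq _⟩

theorem NearSep.sepNum {φ : Letter → ℂ → ℂ} {K : Set ℂ} (hK : IsAttractor φ K)
    {x y : ℕ → Letter} {c m : ℕ} (h : NearSep φ K x y c) (hm : SepNum φ K x y m) :
    c ≤ m ∧ m ≤ c + 1 := by
  constructor
  · by_contra hlt
    have h1 := hm.2 c (by omega)
    rw [preWord_congr h.1, Set.inter_self] at h1
    obtain ⟨z, hz⟩ := hK.1
    exact (Set.eq_empty_iff_forall_notMem.1 h1) _ ⟨z, hz, rfl⟩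
  · by_contra hlt
    obtain ⟨p, hp1, hp2⟩ := hm.1
    have h2 := h.2
    rw [DisjCyl, Set.eq_empty_iff_forall_notMem] at h2
    exact h2 p ⟨cyl_antitone hK x (by omega) hp1, cyl_antitone hK y (by omega) hp2⟩

/-! ### The disjoint cylinders of `E` and `F` that occur -/

theorem phiE_eq : phiE = phiD dE := rfl

theorem phiF_eq : phiF = phiD dF := rfl

theorem letter_cases (a : Letter) : a = l1 ∨ a = l2 ∨ a = l3 ∨ a = l4 ∨ a = l5 := by
  fin_cases a <;> decide

theorem dE_values : dE l1 = 0 ∧ dE l2 = 1 ∧ dE l3 = 2 ∧ dE l4 = 2 + Complex.I ∧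
    dE l5 = 1 + 2 * Complex.I := ⟨rfl, rfl, rfl, rfl, rfl⟩

theorem dF_values : dF l1 = 1 + 2 * Complex.I ∧ dF l2 = 1 + Complex.I ∧ dF l3 = 1 ∧
    dF l4 = 0 ∧ dF l5 = 2 + Complex.I := ⟨rfl, rfl, rfl, rfl, rfl⟩

theorem digitBox_dE : DigitBox dE := by
  intro j
  fin_cases j <;> norm_num [dE]

theorem digitBox_dF : DigitBox dF := by
  intro j
  fin_cases j <;> norm_num [dF]

theorem noTopCorner_dE : NoTopCorner dE := by
  intro j
  fin_cases j <;> norm_num [dE]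

theorem noTopCorner_dF : NoTopCorner dF := by
  intro j
  fin_cases j <;> norm_num [dF]

/-- The triples `(a, a', b)` for which the cylinder `aa'` is disjoint from the cylinder `b`
both in `E` and in `F`, as far as they are needed. -/
def CommonSep (a a' b : Letter) : Prop :=
  (a = l5 ∧ b ≠ l5) ∨ (a = l2 ∧ b = l4) ∨ (a = l2 ∧ (a' = l2 ∨ a' = l5) ∧ (b = l1 ∨ b = l3))

/-- In `E`, the first-level pieces `5, b` and `2, 4` could at most share a corner that is missing
from `E`, and `2` meets `1` and `3` only on its left and right sides, which `22` and `25` avoid. -/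
theorem sepE {E : Set ℂ} (hE : IsAttractor phiE E) {a a' b : Letter} (h : CommonSep a a' b) :
    Sep2 phiE E a a' b := by
  rw [phiE_eq] at *
  intro z hz w hw heq
  obtain ⟨q1, q2⟩ := phiD_eq heq
  obtain ⟨r1, r2⟩ := phiD_eq (rfl : phiD dE b w = _)
  obtain ⟨s1, s2⟩ := phiD_eq (rfl : phiD dE a' z = _)
  have hy := attractor_map hE a' hz
  obtain ⟨y1, y2, y3, y4⟩ := attractor_box digitBox_dE hE hy
  obtain ⟨w1, w2, w3, w4⟩ := attractor_box digitBox_dE hE hw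
  obtain ⟨z1, z2, z3, z4⟩ := attractor_box digitBox_dE hE hz
  have cy := no_top_corner digitBox_dE noTopCorner_dE hE hy
  have cw := no_top_corner digitBox_dE noTopCorner_dE hE hw
  generalize phiD dE a' z = y at *
  rcases h with ⟨rfl, hb⟩ | ⟨rfl, rfl⟩ | ⟨rfl, ha, hb⟩
  · rcases letter_cases b with rfl | rfl | rfl | rfl | rfl <;> norm_num [dE_values] at q1 q2 r1 r2 hb
    · linarith
    · linarith
    · linarith
    · exact (cw (by linarith)).1 (by linarith)
  · norm_num [dE_values] at q1 q2 r1 r2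
    exact (cy (by linarith)).2 (by linarith)
  · rcases ha with rfl | rfl <;> rcases hb with rfl | rfl <;>
      norm_num [dE_values] at q1 q2 r1 r2 s1 s2 <;> linarith

/-- `F` and its translate `F + 1` are disjoint. -/
theorem sideF {F : Set ℂ} (hF : IsAttractor phiF F) {z w : ℂ} (hz : z ∈ F) (hw : w ∈ F)
    (hz0 : z.re = 0) (hw1 : w.re = 1) : z.im ≠ w.im := by
  rw [phiF_eq] at *
  intro him
  obtain ⟨j, z', hz', q⟩ := attractor_step hF hz
  obtain ⟨k, w', hw', r⟩ := attractor_step hF hw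
  obtain ⟨q1, q2⟩ := phiD_eq q
  obtain ⟨r1, r2⟩ := phiD_eq r
  obtain ⟨z1, z2, z3, z4⟩ := attractor_box digitBox_dF hF hz'
  obtain ⟨w1, w2, w3, w4⟩ := attractor_box digitBox_dF hF hw'
  have cz := no_top_corner digitBox_dF noTopCorner_dF hF hz'
  clear q r
  -- only the digits `0` (for `z`) and `2 + i` (for `w`) survive, forcing the corner `i` into `F`
  rcases letter_cases j with rfl | rfl | rfl | rfl | rfl <;>
    norm_num [dF_values] at q1 q2 <;> try linarith
  rcases letter_cases k with rfl | rfl | rfl | rfl | rfl <;>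
    norm_num [dF_values] at r1 r2 <;> try linarith
  exact (cz (by linarith)).1 (by linarith)

/-- In `F`, horizontally adjacent pieces are disjoint by `sideF`, diagonal ones could at most share
a missing corner, and `2` meets `1` and `3` only on its top and bottom sides, which `22` and `25`
avoid. -/
theorem sepF {F : Set ℂ} (hF : IsAttractor phiF F) {a a' b : Letter}
    (h : CommonSep a a' b ∨ (a = l3 ∧ b = l4)) : Sep2 phiF F a a' b := by
  have side := @sideF F hF
  rw [phiF_eq] at *
  intro z hz w hw heq
  obtain ⟨q1, q2⟩ := phiD_eq heq
  obtain ⟨r1, r2⟩ := phiD_eq (rfl : phiD dF b w = _)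
  obtain ⟨s1, s2⟩ := phiD_eq (rfl : phiD dF a' z = _)
  have hy := attractor_map hF a' hz
  obtain ⟨y1, y2, y3, y4⟩ := attractor_box digitBox_dF hF hy
  obtain ⟨w1, w2, w3, w4⟩ := attractor_box digitBox_dF hF hw
  obtain ⟨z1, z2, z3, z4⟩ := attractor_box digitBox_dF hF hz
  have cy := no_top_corner digitBox_dF noTopCorner_dF hF hy
  have cw := no_top_corner digitBox_dF noTopCorner_dF hF hw
  have hyw := side hy hw
  generalize phiD dF a' z = y at *
  rcases h with (⟨rfl, hb⟩ | ⟨rfl, rfl⟩ | ⟨rfl, ha, hb⟩) | ⟨rfl, rfl⟩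
  · rcases letter_cases b with rfl | rfl | rfl | rfl | rfl <;> norm_num [dF_values] at q1 q2 r1 r2 hb
    · exact (cy (by linarith)).1 (by linarith)
    · exact hyw (by linarith) (by linarith) (by linarith)
    · exact (cw (by linarith)).2 (by linarith)
    · linarith
  · norm_num [dF_values] at q1 q2 r1 r2
    exact (cw (by linarith)).2 (by linarith)
  · rcases ha with rfl | rfl <;> rcases hb with rfl | rfl <;>
      norm_num [dF_values] at q1 q2 r1 r2 s1 s2 <;> linarith
  · norm_num [dF_values] at q1 q2 r1 r2
    exact hyw (by linarith) (by linarith) (by linarith)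

/-! ### First segments and their images -/

theorem fword_length (x : ℕ → Letter) (j L : ℕ) : (fword x j L).length = L := by
  simp [fword]

theorem fword_getElem? (x : ℕ → Letter) (j : ℕ) {L i : ℕ} (h : i < L) :
    (fword x j L)[i]? = some (x (j + i)) := by
  simp [fword, h]

theorem fword_headI (x : ℕ → Letter) (j : ℕ) {L : ℕ} (h : 0 < L) :
    (fword x j L).headI = x j := by
  obtain ⟨n, rfl⟩ : ∃ n, L = n + 1 := ⟨L - 1, by omega⟩
  simp [fword, List.ofFn_succ]

theorem fword_congr {x y : ℕ → Letter} {L : ℕ} (h : ∀ i, i < L → x i = y i) :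
    fword x 0 L = fword y 0 L := by
  unfold fword
  congr 1
  funext i
  simpa using h i i.2

theorem ESegment.pos {x : ℕ → Letter} {j L : ℕ} (h : ESegment x j L) : 1 ≤ L := by
  rcases h with (⟨h, -⟩ | ⟨h, -⟩) | ⟨h, -⟩ <;> omega

theorem ESpecial.head {x : ℕ → Letter} {j L : ℕ} (h : ESpecial x j L) :
    2 ≤ L ∧ (x j = l3 ∨ x j = l4) := by
  rcases h with ⟨h, h', -⟩ | ⟨h, h', -⟩
  · exact ⟨h, Or.inl h'⟩
  · exact ⟨h, Or.inr h'⟩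

theorem ESpecial.le {x : ℕ → Letter} {L M : ℕ} (h : ESpecial x 0 L) (h' : ESpecial x 0 M) :
    L ≤ M := by
  by_contra hlt
  rcases h with ⟨a1, a2, a3, a4⟩ | ⟨a1, a2, a3, a4⟩ <;>
    rcases h' with ⟨b1, b2, b3, b4⟩ | ⟨b1, b2, b3, b4⟩
  · exact b4 (a3 M (by omega) (by omega))
  · exact absurd (a2.symm.trans b2) (by decide)
  · exact absurd (a2.symm.trans b2) (by decide)
  · have h2 := a3 (M - 1) (by omega) (by omega)
    rw [show 0 + M - 1 = 0 + (M - 1) by omega] at b4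
    exact absurd (h2.symm.trans b4) (by decide)

theorem ESegment.unique {x : ℕ → Letter} {L M : ℕ} (h : ESegment x 0 L)
    (h' : ESegment x 0 M) : L = M := by
  rcases h with h | ⟨h1, h2⟩ <;> rcases h' with h' | ⟨h1', h2'⟩
  · exact le_antisymm (h.le h') (h'.le h)
  · exact absurd ⟨le_rfl, by have := h.head.1; omega⟩ (h2' 0 L h)
  · exact absurd ⟨le_rfl, by have := h'.head.1; omega⟩ (h2 0 M h')
  · omega

theorem g0_three {x : ℕ → Letter} {L : ℕ} (hL : 2 ≤ L) (h0 : x 0 = l3) :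
    g0 (fword x 0 L) = l4 :: (List.replicate (L - 2) l2 ++ [l5]) := by
  have hh := fword_headI x 0 (show 0 < L by omega)
  have hne : fword x 0 L ≠ [l4, l5] := by
    intro h
    rw [h, h0] at hh
    exact absurd hh (by decide)
  rw [g0, fword_length, if_neg (by omega), if_neg hne, if_pos (hh.trans h0)]

theorem g0_four {x : ℕ → Letter} {L : ℕ} (hL : 3 ≤ L) (h0 : x 0 = l4) :
    g0 (fword x 0 L) = l4 :: (List.replicate (L - 3) l2 ++ [l5, l5]) := by
  have hh := fword_headI x 0 (show 0 < L by omega)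
  have hne : fword x 0 L ≠ [l4, l5] := by
    intro h
    have := congrArg List.length h
    rw [fword_length] at this
    simp at this
    omega
  rw [g0, fword_length, if_neg (by omega), if_neg hne, if_neg]
  rw [hh, h0]
  decide

theorem g0_fourFive {x : ℕ → Letter} (h0 : x 0 = l4) (h1 : x 1 = l5) :
    g0 (fword x 0 2) = [l3, l5] := by
  have h : fword x 0 2 = [l4, l5] := by simp [fword, h0, h1]
  rw [h]
  rfl

/-- The image under `g₀` of a segment not starting with `2` or `5` does not start with `2`
or `5` either. -/
theorem g0_headI {w : List Letter} (h : w.headI ≠ l2 ∧ w.headI ≠ l5) :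
    (g0 w).headI ≠ l2 ∧ (g0 w).headI ≠ l5 := by
  unfold g0
  split_ifs
  · exact h
  all_goals simp only [List.headI_cons]; decide

/-- In a sequence of `Ω`, a run of a letter other than `4` that starts at position `1` ends. -/
theorem exists_run {x : ℕ → Letter} (hx : x ∈ OmegaSeq) {a : Letter} (ha : a ≠ l4) :
    ∃ k, (∀ i, 1 ≤ i → i ≤ k → x i = a) ∧ x (k + 1) ≠ a := by
  classical
  have hex : ∃ k, x (k + 1) ≠ a := by
    obtain ⟨N, hN⟩ := hx
    exact ⟨N, by rw [hN (N + 1) (by omega)]; exact ha.symm⟩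
  refine ⟨Nat.find hex, fun i h1 h2 => ?_, Nat.find_spec hex⟩
  have h3 := Nat.find_min hex (m := i - 1) (by omega)
  rwa [not_not, Nat.sub_add_cancel h1] at h3

/-- `x = 35^k a⋯` with `a ≠ 5`, and `u = 3⋯` (if `k = 0`) or `u = 42^{k-1}5⋯`. -/
def ShapeA (x u : ℕ → Letter) (k : ℕ) : Prop :=
  x 0 = l3 ∧ (∀ i, 1 ≤ i → i ≤ k → x i = l5) ∧ x (k + 1) ≠ l5 ∧
    ((k = 0 ∧ u 0 = l3) ∨
      (1 ≤ k ∧ u 0 = l4 ∧ (∀ i, 1 ≤ i → i < k → u i = l2) ∧ u k = l5))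

/-- `x = 42^k5⋯`, and `u = 3⋯` (if `k = 0`) or `u = 42^{k-1}5⋯`. -/
def ShapeB (x u : ℕ → Letter) (k : ℕ) : Prop :=
  x 0 = l4 ∧ (∀ i, 1 ≤ i → i ≤ k → x i = l2) ∧ x (k + 1) = l5 ∧
    ((k = 0 ∧ u 0 = l3) ∨
      (1 ≤ k ∧ u 0 = l4 ∧ (∀ i, 1 ≤ i → i < k → u i = l2) ∧ u k = l5))

/-- `x = 42^k a⋯` and `u = 42^k a'⋯` with `a, a' ∉ {2, 5}`. -/
def ShapeC (x u : ℕ → Letter) (k : ℕ) : Prop :=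
  x 0 = l4 ∧ (∀ i, 1 ≤ i → i ≤ k → x i = l2) ∧ (x (k + 1) ≠ l2 ∧ x (k + 1) ≠ l5) ∧
    u 0 = l4 ∧ (∀ i, 1 ≤ i → i ≤ k → u i = l2) ∧ (u (k + 1) ≠ l2 ∧ u (k + 1) ≠ l5)

/-- The three possible forms of a sequence starting with `3` or `4`, by its first segment. -/
theorem shape {x u : ℕ → Letter} (hx : x ∈ OmegaSeq) {L : ℕ} (hL : ESegment x 0 L)
    (hu : gRel x u) (h0 : x 0 = l3 ∨ x 0 = l4) :
    (∃ k, L = k + 1 ∧ ShapeA x u k) ∨ (∃ k, L = k + 2 ∧ ShapeB x u k) ∨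
      (L = 1 ∧ ∃ k, ShapeC x u k) := by
  obtain ⟨b, ⟨hb0, hb⟩, hg⟩ := hu
  have hb1 : b 1 = L := by
    have h := hb 0
    rw [hb0] at h
    simpa using h.unique hL
  have hg0 := hg 0
  simp only [hb0, zero_add, hb1, Nat.sub_zero] at hg0
  have hget : ∀ i, i < L → some (u i) = (g0 (fword x 0 L))[i]? := by
    intro i hi
    rw [← hg0, fword_getElem? u 0 hi, zero_add]
  rcases hL with (⟨a1, a2, a3, a4⟩ | ⟨a1, a2, a3, a4⟩) | ⟨rfl, hpl⟩
  · -- `35^k` with `k ≥ 1`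
    left
    obtain ⟨k, rfl⟩ : ∃ k, L = k + 2 := ⟨L - 2, by omega⟩
    rw [g0_three a1 a2] at hget
    refine ⟨k + 1, rfl, a2, fun i h1 h2 => ?_, ?_, Or.inr ⟨by omega, ?_, fun i h1 h2 => ?_, ?_⟩⟩
    · simpa using a3 i h1 (by omega)
    · simpa using a4
    · simpa using hget 0 (by omega)
    · obtain ⟨i, rfl⟩ : ∃ n, i = n + 1 := ⟨i - 1, by omega⟩
      have h := hget (i + 1) (by omega)
      rw [List.getElem?_cons_succ, List.getElem?_append_left (by simp; omega)] at h
      simpa [List.getElem?_replicate, show i < k by omega] using h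
    · have h := hget (k + 1) (by omega)
      rw [List.getElem?_cons_succ, List.getElem?_append_right (by simp)] at h
      simpa using h
  · -- `42^k5`
    right; left
    obtain ⟨k, rfl⟩ : ∃ k, L = k + 2 := ⟨L - 2, by omega⟩
    have a4' : x (k + 1) = l5 := by
      rwa [show 0 + (k + 2) - 1 = k + 1 by omega] at a4
    refine ⟨k, rfl, a2, fun i h1 h2 => ?_, a4', ?_⟩
    · simpa using a3 i h1 (by omega)
    rcases Nat.eq_zero_or_pos k with rfl | hk
    · left
      rw [g0_fourFive a2 a4'] at hget
      exact ⟨rfl, by simpa using hget 0 (by omega)⟩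
    · right
      rw [g0_four (by omega) a2] at hget
      refine ⟨hk, ?_, fun i h1 h2 => ?_, ?_⟩
      · simpa using hget 0 (by omega)
      · obtain ⟨i, rfl⟩ : ∃ n, i = n + 1 := ⟨i - 1, by omega⟩
        have h := hget (i + 1) (by omega)
        rw [List.getElem?_cons_succ, List.getElem?_append_left (by simp; omega)] at h
        exact (show i < k - 1 ∧ u (i + 1) = l2 by simpa [List.getElem?_replicate] using h).2
      · obtain ⟨k, rfl⟩ : ∃ n, k = n + 1 := ⟨k - 1, by omega⟩
        have h := hget (k + 1) (by omega)
        rw [List.getElem?_cons_succ, List.getElem?_append_right (by simp)] at h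
        simpa using h
  · have hns : ∀ M, ¬ ESpecial x 0 M := fun M hM =>
      hpl 0 M hM ⟨le_rfl, by have := hM.head.1; omega⟩
    have hu0 : u 0 = x 0 := by
      have h := hget 0 (by omega)
      rw [g0, if_pos (by rw [fword_length]), fword_getElem? x 0 (by omega)] at h
      simpa using h
    rcases h0 with h0 | h0
    · -- a plain `3` cannot be followed by `5`: the run of `5` would end, giving `35^k`
      left
      refine ⟨0, rfl, h0, fun i h1 h2 => by omega, fun h5 => ?_, Or.inl ⟨rfl, hu0.trans h0⟩⟩
      obtain ⟨k, hk, hk'⟩ := exists_run hx (a := l5) (by decide)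
      have hk1 : 1 ≤ k := by
        by_contra hlt
        obtain rfl : k = 0 := by omega
        exact hk' h5
      refine hns (k + 1) (Or.inl ⟨by omega, h0, fun i h1 h2 => ?_, by simpa using hk'⟩)
      simpa using hk i h1 (by omega)
    · right; right
      obtain ⟨k, hk, hk'⟩ := exists_run hx (a := l2) (by decide)
      have hk5 : x (k + 1) ≠ l5 := by
        intro h5
        refine hns (k + 2) (Or.inr ⟨by omega, h0, fun i h1 h2 => ?_, ?_⟩)
        · simpa using hk i h1 (by omega)
        · rwa [show 0 + (k + 2) - 1 = k + 1 by omega]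
      -- the letters `4, 2, …, 2` at positions `0, …, k` are plain, so the segments are single
      have hbi : ∀ i, i ≤ k → b (i + 1) = i + 1 := by
        intro i
        induction i with
        | zero => intro _; exact hb1
        | succ i ih =>
          intro hi
          have h2 := hk (i + 1) (by omega) hi
          have h := hb (i + 1)
          rw [ih (by omega)] at h
          rcases h with h | ⟨h, -⟩
          · rcases h.head.2 with h | h <;> exact absurd (h2.symm.trans h) (by decide)
          · omega
      refine ⟨rfl, k, h0, hk, ⟨hk', hk5⟩, hu0.trans h0, fun i h1 h2 => ?_, ?_⟩
      · obtain ⟨i, rfl⟩ : ∃ n, i = n + 1 := ⟨i - 1, by omega⟩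
        have h := hg (i + 1)
        rw [hbi (i + 1) h2, hbi i (by omega), show i + 1 + 1 - (i + 1) = 1 by omega,
          g0, if_pos (by rw [fword_length])] at h
        have h' := congrArg (fun w => w.headI) h
        simp only [fword_headI _ _ Nat.one_pos] at h'
        exact h'.trans (hk _ h1 h2)
      · have h := hg (k + 1)
        have hpos := (hb (k + 1)).pos
        rw [hbi k le_rfl] at h hpos
        have h' := congrArg (fun w => w.headI) h
        simp only [fword_headI u _ hpos] at h'
        rw [h']
        apply g0_headI
        rw [fword_headI x _ hpos]
        exact ⟨hk', hk5⟩

/-! ### Comparison of the separation numbers -/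

/-- `x, y` and `u, v` separate at almost the same level in `E` and in `F`, respectively. -/
def Comparable (E F : Set ℂ) (x y u v : ℕ → Letter) : Prop :=
  ∃ c c', NearSep phiE E x y c ∧ NearSep phiF F u v c' ∧ c ≤ c' + 1 ∧ c' ≤ c + 1

theorem Comparable.symm {E F : Set ℂ} {x y u v : ℕ → Letter} (h : Comparable E F x y u v) :
    Comparable E F y x v u := by
  obtain ⟨c, c', h1, h2, h3⟩ := h
  exact ⟨c, c', h1.symm, h2.symm, h3⟩

theorem nearSepE {E : Set ℂ} (hE : IsAttractor phiE E) {x y : ℕ → Letter} {c : ℕ}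
    (h : ∀ i, i < c → x i = y i) (hs : CommonSep (x c) (x (c + 1)) (y c)) :
    NearSep phiE E x y c :=
  NearSep.of_sep2 (fun j => phiD_inj dE j) hE h (sepE hE hs)

theorem nearSepF {F : Set ℂ} (hF : IsAttractor phiF F) {x y : ℕ → Letter} {c : ℕ}
    (h : ∀ i, i < c → x i = y i)
    (hs : CommonSep (x c) (x (c + 1)) (y c) ∨ (x c = l3 ∧ y c = l4)) :
    NearSep phiF F x y c :=
  NearSep.of_sep2 (fun j => phiD_inj dF j) hF h (sepF hF hs)

/-- An image `u` of `35^k` or `42^k5` separates from a sequence `v = 42^k⋯` near level `k`. -/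
theorem nearSepF_image {F : Set ℂ} (hF : IsAttractor phiF F) {u v : ℕ → Letter} {k : ℕ}
    (hu : (k = 0 ∧ u 0 = l3) ∨
      (1 ≤ k ∧ u 0 = l4 ∧ (∀ i, 1 ≤ i → i < k → u i = l2) ∧ u k = l5))
    (hv0 : v 0 = l4) (hv : ∀ i, 1 ≤ i → i ≤ k → v i = l2) : NearSep phiF F u v k := by
  rcases hu with ⟨rfl, hu⟩ | ⟨hk, hu0, hu1, hu2⟩
  · exact nearSepF hF (fun i hi => by omega) (Or.inr ⟨hu, hv0⟩)
  · refine nearSepF hF (fun i hi => ?_) (Or.inl (Or.inl ⟨hu2, ?_⟩))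
    · rcases Nat.eq_zero_or_pos i with rfl | h
      · rw [hu0, hv0]
      · rw [hu1 i h hi, hv i h hi.le]
    · rw [hv k hk le_rfl]
      decide

theorem comparable_AA {E F : Set ℂ} (hE : IsAttractor phiE E) (hF : IsAttractor phiF F)
    {x y u v : ℕ → Letter} {k l : ℕ} (hx : ShapeA x u k) (hy : ShapeA y v l) (h : k < l) :
    Comparable E F x y u v := by
  obtain ⟨x0, x1, x2, x3⟩ := hx
  obtain ⟨y0, y1, y2, y3⟩ := hy
  refine ⟨k + 1, k, (nearSepE hE (fun i hi => ?_) (Or.inl ⟨?_, x2⟩)).symm, ?_, by omega, by omega⟩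
  · rcases Nat.eq_zero_or_pos i with rfl | h'
    · rw [x0, y0]
    · rw [x1 i h' (by omega), y1 i h' (by omega)]
  · exact y1 _ (by omega) (by omega)
  · obtain ⟨rfl, -⟩ | ⟨-, v0, v1, -⟩ := y3
    · omega
    · exact nearSepF_image hF x3 v0 fun i h1 h2 => v1 i h1 (by omega)

theorem comparable_BB {E F : Set ℂ} (hE : IsAttractor phiE E) (hF : IsAttractor phiF F)
    {x y u v : ℕ → Letter} {k l : ℕ} (hx : ShapeB x u k) (hy : ShapeB y v l) (h : k < l) :
    Comparable E F x y u v := by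
  obtain ⟨x0, x1, x2, x3⟩ := hx
  obtain ⟨y0, y1, y2, y3⟩ := hy
  refine ⟨k + 1, k, nearSepE hE (fun i hi => ?_) (Or.inl ⟨x2, ?_⟩), ?_, by omega, by omega⟩
  · rcases Nat.eq_zero_or_pos i with rfl | h'
    · rw [x0, y0]
    · rw [x1 i h' (by omega), y1 i h' (by omega)]
  · rw [y1 _ (by omega) (by omega)]
    decide
  · obtain ⟨rfl, -⟩ | ⟨-, v0, v1, -⟩ := y3
    · omega
    · exact nearSepF_image hF x3 v0 fun i h1 h2 => v1 i h1 (by omega)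

theorem commonSep_two {a' b : Letter} (ha : a' = l2 ∨ a' = l5) (hb : b ≠ l2 ∧ b ≠ l5) :
    CommonSep l2 a' b := by
  rcases letter_cases b with rfl | rfl | rfl | rfl | rfl
  · exact Or.inr (Or.inr ⟨rfl, ha, Or.inl rfl⟩)
  · exact absurd rfl hb.1
  · exact Or.inr (Or.inr ⟨rfl, ha, Or.inr rfl⟩)
  · exact Or.inr (Or.inl ⟨rfl, rfl⟩)
  · exact absurd rfl hb.2

theorem comparable_BC {E F : Set ℂ} (hE : IsAttractor phiE E) (hF : IsAttractor phiF F)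
    {x y u v : ℕ → Letter} {k l : ℕ} (hx : ShapeB x u k) (hy : ShapeC y v l) :
    Comparable E F x y u v := by
  obtain ⟨x0, x1, x2, x3⟩ := hx
  obtain ⟨y0, y1, y2, v0, v1, v2⟩ := hy
  rcases le_or_gt k l with h | h
  · -- `y = 42^k b⋯` with `b ≠ 5`
    refine ⟨k + 1, k, nearSepE hE (fun i hi => ?_) (Or.inl ⟨x2, ?_⟩),
      nearSepF_image hF x3 v0 fun i h1 h2 => v1 i h1 (by omega), by omega, by omega⟩
    · rcases Nat.eq_zero_or_pos i with rfl | h'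
      · rw [x0, y0]
      · rw [x1 i h' (by omega), y1 i h' (by omega)]
    · rcases h.lt_or_eq with h | rfl
      · rw [y1 _ (by omega) (by omega)]
        decide
      · exact y2.2
  · -- `x = 42^l 2⋯` and `y = 42^l a⋯` with `a ∉ {2, 5}`
    obtain ⟨rfl, -⟩ | ⟨-, u0, u1, u2⟩ := x3
    · omega
    refine ⟨l + 1, l + 1, nearSepE hE (fun i hi => ?_) ?_, nearSepF hF (fun i hi => ?_) ?_,
      by omega, by omega⟩
    · rcases Nat.eq_zero_or_pos i with rfl | h'
      · rw [x0, y0]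
      · rw [x1 i h' (by omega), y1 i h' (by omega)]
    · rw [x1 (l + 1) (by omega) (by omega)]
      refine commonSep_two ?_ y2
      rcases (Nat.succ_le_of_lt h).lt_or_eq with h | rfl
      · exact Or.inl (x1 _ (by omega) (by omega))
      · exact Or.inr x2
    · rcases Nat.eq_zero_or_pos i with rfl | h'
      · rw [u0, v0]
      · rw [u1 i h' (by omega), v1 i h' (by omega)]
    · left
      rcases (Nat.succ_le_of_lt h).lt_or_eq with h | rfl
      · rw [u1 (l + 1) (by omega) (by omega)]
        refine commonSep_two ?_ v2
        rcases (Nat.succ_le_of_lt h).lt_or_eq with h | rfl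
        · exact Or.inl (u1 _ (by omega) (by omega))
        · exact Or.inr u2
      · exact Or.inl ⟨u2, v2.2⟩

theorem comparable {E F : Set ℂ} (hE : IsAttractor phiE E) (hF : IsAttractor phiF F)
    {x y : ℕ → Letter} (hx : x ∈ OmegaSeq) (hy : y ∈ OmegaSeq) (h0 : x 0 = y 0)
    {L M : ℕ} (hL : ESegment x 0 L) (hM : ESegment y 0 M)
    (hLM : fword x 0 L ≠ fword y 0 M)
    {u v : ℕ → Letter} (hu : gRel x u) (hv : gRel y v) : Comparable E F x y u v := by
  by_cases h34 : x 0 = l3 ∨ x 0 = l4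
  · have hdisj : l3 ≠ l4 := by decide
    rcases shape hx hL hu h34 with ⟨k, rfl, hX⟩ | ⟨k, rfl, hX⟩ | ⟨rfl, k, hX⟩ <;>
      rcases shape hy hM hv (h0 ▸ h34) with ⟨l, rfl, hY⟩ | ⟨l, rfl, hY⟩ | ⟨rfl, l, hY⟩
    · rcases lt_trichotomy k l with h | rfl | h
      · exact comparable_AA hE hF hX hY h
      · refine absurd (fword_congr fun i hi => ?_) hLM
        rcases Nat.eq_zero_or_pos i with rfl | h'
        · exact h0
        · rw [hX.2.1 i h' (by omega), hY.2.1 i h' (by omega)]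
      · exact (comparable_AA hE hF hY hX h).symm
    · exact absurd (hX.1.symm.trans (h0.trans hY.1)) hdisj
    · exact absurd (hX.1.symm.trans (h0.trans hY.1)) hdisj
    · exact absurd (hY.1.symm.trans (h0.symm.trans hX.1)) hdisj
    · rcases lt_trichotomy k l with h | rfl | h
      · exact comparable_BB hE hF hX hY h
      · refine absurd (fword_congr fun i hi => ?_) hLM
        rcases Nat.eq_zero_or_pos i with rfl | h'
        · exact h0
        · rcases (Nat.lt_succ_iff.1 hi).lt_or_eq with h | rfl
          · rw [hX.2.1 i h' (by omega), hY.2.1 i h' (by omega)]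
          · rw [hX.2.2.1, hY.2.2.1]
      · exact (comparable_BB hE hF hY hX h).symm
    · exact comparable_BC hE hF hX hY
    · exact absurd (hY.1.symm.trans (h0.symm.trans hX.1)) hdisj
    · exact (comparable_BC hE hF hY hX).symm
    · refine absurd (fword_congr fun i hi => ?_) hLM
      obtain rfl : i = 0 := by omega
      exact h0
  · -- segments starting with `1`, `2` or `5` are single letters
    have h1 : L = 1 := by
      rcases hL with h | ⟨h, -⟩
      · exact absurd h.head.2 h34
      · exact h
    have h2 : M = 1 := by
      rcases hM with h | ⟨h, -⟩
      · exact absurd h.head.2 (h0 ▸ h34)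
      · exact h
    subst h1 h2
    refine absurd (fword_congr fun i hi => ?_) hLM
    obtain rfl : i = 0 := by omega
    exact h0

/-- If `x, y ∈ Ω` have the same first letter but distinct first
`E`-segments, then `π_E(x) ≠ π_E(y)`, `π_F(g(x)) ≠ π_F(g(y))`, and
`|Λ_E(x,y) − Λ_F(g(x),g(y))| ≤ 3`. -/
theorem stmt16 (E F : Set ℂ) (hE : IsAttractor phiE E) (hF : IsAttractor phiF F)
    (x y : ℕ → Letter) (hx : x ∈ OmegaSeq) (hy : y ∈ OmegaSeq) (h0 : x 0 = y 0)
    (L M : ℕ) (hL : ESegment x 0 L) (hM : ESegment y 0 M)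
    (hLM : fword x 0 L ≠ fword y 0 M)
    (u v : ℕ → Letter) (hu : gRel x u) (hv : gRel y v)
    (p q p' q' : ℂ)
    (hp : codes phiE E x p) (hq : codes phiE E y q)
    (hp' : codes phiF F u p') (hq' : codes phiF F v q') :
    p ≠ q ∧ p' ≠ q' ∧
    ∀ m n : ℕ, SepNum phiE E x y m → SepNum phiF F u v n →
      |(m : ℤ) - (n : ℤ)| ≤ 3 := by
  obtain ⟨c, c', h1, h2, h3, h4⟩ := comparable hE hF hx hy h0 hL hM hLM hu hv
  refine ⟨h1.codes_ne hp hq, h2.codes_ne hp' hq', fun m n hm hn => ?_⟩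
  have hm' := h1.sepNum hE hm
  have hn' := h2.sepNum hF hn
  rw [abs_le]
  omega
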